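/- Let n be a natural number with n ≥ 3. Then √n ≤ liminf_{λ→∞} c_n(λ)/√(2λ) and limsup_{λ→∞} c_n(λ)/√(2λ) ≤ √(3n). -/

import Mathlib

open Polynomial Filter

/-- The weighted `L_2` norm with the Gegenbauer weight `w_lam(t) = (1-t^2)^(lam-1/2)`. -/
noncomputable def gegNorm (lam : ℝ) (f : ℝ → ℝ) : ℝ :=
  (∫ x in (-1:ℝ)..1, (f x) ^ 2 * (1 - x ^ 2) ^ (lam - 1/2)) ^ ((1:ℝ)/2)

/-- The best Markov constant `c_n(lam)` in `‖p'‖ ≤ c_n(lam) ‖p‖` for polynomials of degree ≤ n. -/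
noncomputable def markovConst (lam : ℝ) (n : ℕ) : ℝ :=
  sSup { r : ℝ | ∃ p : Polynomial ℝ, p ≠ 0 ∧ p.natDegree ≤ n ∧
    r = gegNorm lam (fun x => (Polynomial.derivative p).eval x) /
        gegNorm lam (fun x => p.eval x) }

/-!
The derivative maps `L²(w_lam)` to `L²(w_{lam+1})`, and `gegRaise lam` is its adjoint: integrating
by parts produces the factor `1 - x²` that raises the index of the weight. These operators obey the
ladder relation `D ∘ gegRaise lam = gegRaise (lam + 1) ∘ D + (2 * lam + 1)`. Iterating it over the
index `lam` yields the sharp inequality `‖p'‖²_{lam+1} ≤ n (n + 2 lam) ‖p‖²_lam`, with equality for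
the Gegenbauer polynomial. Since `‖q‖²_lam = ‖q‖²_{lam+1} + ‖x q‖²_lam`, replacing `‖p'‖_{lam+1}` by
`‖p'‖_lam` costs only `‖x p'‖²_lam`, which the ladder relation bounds by `O(1 / lam) ‖p'‖²_{lam+1}`.
Hence, for fixed `n`, `c_n(lam)² = n (n + 2 lam) (1 + O(1 / lam))`, and `c_n(lam) / √(2 lam)`
converges to `√n`.
-/

open MeasureTheory Topology

/-- The inner product of two polynomials in `L²` of the Gegenbauer weight `w_lam`. -/
noncomputable def gegInner (lam : ℝ) (p q : ℝ[X]) : ℝ :=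
  ∫ x in (-1 : ℝ)..1, p.eval x * q.eval x * (1 - x ^ 2) ^ (lam - 1 / 2)

/-- The adjoint of the derivative, seen as a map from `L²(w_lam)` to `L²(w_{lam+1})`; the raising
operator of the Gegenbauer polynomials. -/
noncomputable def gegRaise (lam : ℝ) (f : ℝ[X]) : ℝ[X] :=
  (2 * lam + 1) • (X * f) - (1 - X ^ 2) * derivative f

/-- The `n`-th eigenvalue of the Gegenbauer operator `p ↦ gegRaise lam (derivative p)`. -/
noncomputable def gegEigenvalue (lam : ℝ) (n : ℕ) : ℝ := n * (n + 2 * lam)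

/-- The Gegenbauer polynomial of degree `n`, normalized so that it is obtained from `1` by the
raising operators alone. -/
noncomputable def gegPoly : ℝ → ℕ → ℝ[X]
  | _, 0 => 1
  | lam, n + 1 => gegRaise lam (gegPoly (lam + 1) n)

section InnerProduct

variable {lam : ℝ}

lemma one_sub_sq_pos {x : ℝ} (hx : x ∈ Set.Ioo (-1 : ℝ) 1) : 0 < 1 - x ^ 2 := by
  nlinarith [hx.1, hx.2]

lemma one_sub_sq_nonneg {x : ℝ} (hx : x ∈ Set.Icc (-1 : ℝ) 1) : 0 ≤ 1 - x ^ 2 := by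
  nlinarith [hx.1, hx.2]

lemma intervalIntegrable_one_sub_sq_rpow_zero_one {a : ℝ} (ha : -1 < a) :
    IntervalIntegrable (fun x : ℝ => (1 - x ^ 2) ^ a) volume 0 1 := by
  have hsub : IntervalIntegrable (fun x : ℝ => (1 - x) ^ a) volume 0 1 := by
    simpa using (intervalIntegral.intervalIntegrable_rpow' ha (a := 1) (b := 0)).comp_sub_left 1
  have hadd : ContinuousOn (fun x : ℝ => (1 + x) ^ a) (Set.uIcc 0 1) := by
    refine ContinuousOn.rpow_const (by fun_prop) fun x hx => Or.inl ?_
    rw [Set.uIcc_of_le zero_le_one] at hx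
    linarith [hx.1]
  refine (hsub.mul_continuousOn hadd).congr fun x hx => ?_
  rw [Set.uIoc_of_le zero_le_one] at hx
  change (1 - x) ^ a * (1 + x) ^ a = (1 - x ^ 2) ^ a
  rw [← Real.mul_rpow (by linarith [hx.2]) (by linarith [hx.1])]
  congr 1
  ring

lemma intervalIntegrable_one_sub_sq_rpow {a : ℝ} (ha : -1 < a) :
    IntervalIntegrable (fun x : ℝ => (1 - x ^ 2) ^ a) volume (-1) 1 := by
  have hpos := intervalIntegrable_one_sub_sq_rpow_zero_one ha
  have hneg : IntervalIntegrable (fun x : ℝ => (1 - x ^ 2) ^ a) volume (-1) 0 := by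
    simpa using (hpos.comp_sub_left 0).symm
  exact hneg.trans hpos

lemma intervalIntegrable_mul_gegWeight (hlam : -1 / 2 < lam) (p q : ℝ[X]) :
    IntervalIntegrable (fun x => p.eval x * q.eval x * (1 - x ^ 2) ^ (lam - 1 / 2))
      volume (-1) 1 :=
  (intervalIntegrable_one_sub_sq_rpow (by linarith)).continuousOn_mul
    (p.continuous.mul q.continuous).continuousOn

lemma gegInner_comm (p q : ℝ[X]) : gegInner lam p q = gegInner lam q p := by
  simp only [gegInner, mul_comm (p.eval _)]

lemma gegInner_mul_left (r p q : ℝ[X]) : gegInner lam (r * p) q = gegInner lam p (r * q) := by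
  simp only [gegInner, eval_mul, mul_comm (r.eval _), mul_assoc]

lemma gegInner_smul_left (c : ℝ) (p q : ℝ[X]) :
    gegInner lam (c • p) q = c * gegInner lam p q := by
  simp only [gegInner, eval_smul, smul_eq_mul, mul_assoc, intervalIntegral.integral_const_mul]

lemma gegInner_smul_right (c : ℝ) (p q : ℝ[X]) :
    gegInner lam p (c • q) = c * gegInner lam p q := by
  rw [gegInner_comm, gegInner_smul_left, gegInner_comm]

lemma gegInner_add_left (hlam : -1 / 2 < lam) (p q r : ℝ[X]) :
    gegInner lam (p + q) r = gegInner lam p r + gegInner lam q r := by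
  simp only [gegInner, eval_add, add_mul]
  exact intervalIntegral.integral_add (intervalIntegrable_mul_gegWeight hlam p r)
    (intervalIntegrable_mul_gegWeight hlam q r)

lemma gegInner_add_right (hlam : -1 / 2 < lam) (p q r : ℝ[X]) :
    gegInner lam p (q + r) = gegInner lam p q + gegInner lam p r := by
  simp only [gegInner_comm p, gegInner_add_left hlam]

lemma gegInner_sub_left (hlam : -1 / 2 < lam) (p q r : ℝ[X]) :
    gegInner lam (p - q) r = gegInner lam p r - gegInner lam q r := by
  rw [eq_sub_iff_add_eq, ← gegInner_add_left hlam, sub_add_cancel]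

lemma gegInner_sub_right (hlam : -1 / 2 < lam) (p q r : ℝ[X]) :
    gegInner lam p (q - r) = gegInner lam p q - gegInner lam p r := by
  simp only [gegInner_comm p, gegInner_sub_left hlam]

lemma gegInner_self_nonneg (p : ℝ[X]) : 0 ≤ gegInner lam p p :=
  intervalIntegral.integral_nonneg (by norm_num) fun _ hx =>
    mul_nonneg (mul_self_nonneg _) (Real.rpow_nonneg (one_sub_sq_nonneg hx) _)

lemma gegInner_self_pos (hlam : -1 / 2 < lam) {p : ℝ[X]} (hp : p ≠ 0) : 0 < gegInner lam p p := by
  have hsupport : Set.Ioo (-1 : ℝ) 1 \ p.rootSet ℝ ⊆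
      (Function.support fun x => p.eval x * p.eval x * (1 - x ^ 2) ^ (lam - 1 / 2)) ∩
        Set.Ioc (-1) 1 := by
    rintro x ⟨hx, hroot⟩
    have heval : p.eval x ≠ 0 := by simpa [mem_rootSet, hp] using hroot
    exact ⟨mul_ne_zero (mul_ne_zero heval heval) (Real.rpow_pos_of_pos (one_sub_sq_pos hx) _).ne',
      Set.Ioo_subset_Ioc_self hx⟩
  refine (intervalIntegral.integral_pos_iff_support_of_nonneg_ae' ?_
    (intervalIntegrable_mul_gegWeight hlam p p)).2 ⟨by norm_num, lt_of_lt_of_le ?_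
      (measure_mono hsupport)⟩
  · rw [Set.uIoc_of_le (by norm_num)]
    exact ae_restrict_of_forall_mem measurableSet_Ioc fun x hx => mul_nonneg (mul_self_nonneg _)
      (Real.rpow_nonneg (one_sub_sq_nonneg (Set.Ioc_subset_Icc_self hx)) _)
  · rw [measure_sdiff_null ((rootSet_finite p ℝ).measure_zero _)]
    simp

lemma gegInner_add_self_le (hlam : -1 / 2 < lam) (p q : ℝ[X]) :
    gegInner lam (p + q) (p + q) ≤ 2 * (gegInner lam p p + gegInner lam q q) := by
  have hsub := gegInner_self_nonneg (lam := lam) (p - q)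
  simp only [gegInner_sub_left hlam, gegInner_sub_right hlam] at hsub
  simp only [gegInner_add_left hlam, gegInner_add_right hlam]
  linarith

lemma gegInner_one_sub_X_sq_mul_left (hlam : -1 / 2 < lam) (p q : ℝ[X]) :
    gegInner lam ((1 - X ^ 2) * p) q = gegInner (lam + 1) p q := by
  refine intervalIntegral.integral_congr fun x hx => ?_
  rw [Set.uIcc_of_le (by norm_num)] at hx
  have hexp : lam + 1 - 1 / 2 = lam - 1 / 2 + 1 := by ring
  simp only [eval_mul, eval_sub, eval_one, eval_pow, eval_X]
  rw [hexp, Real.rpow_add_one' (one_sub_sq_nonneg hx) (by linarith)]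
  ring

lemma gegInner_add_one_self (hlam : -1 / 2 < lam) (p : ℝ[X]) :
    gegInner (lam + 1) p p = gegInner lam p p - gegInner lam (X * p) (X * p) := by
  rw [← gegInner_one_sub_X_sq_mul_left hlam, sub_mul, one_mul, gegInner_sub_left hlam, sq,
    mul_assoc, gegInner_mul_left X]

lemma gegInner_add_one_self_le (hlam : -1 / 2 < lam) (p : ℝ[X]) :
    gegInner (lam + 1) p p ≤ gegInner lam p p := by
  rw [gegInner_add_one_self hlam]
  exact sub_le_self _ (gegInner_self_nonneg _)

end InnerProduct

section Ladder

variable {lam : ℝ}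

lemma hasDerivAt_mul_gegWeight_add_one (lam : ℝ) (f g : ℝ[X]) {x : ℝ}
    (hx : x ∈ Set.Ioo (-1 : ℝ) 1) :
    HasDerivAt (fun x => f.eval x * g.eval x * (1 - x ^ 2) ^ (lam + 1 - 1 / 2))
      (f.eval x * (derivative g).eval x * (1 - x ^ 2) ^ (lam + 1 - 1 / 2) -
        (gegRaise lam f).eval x * g.eval x * (1 - x ^ 2) ^ (lam - 1 / 2)) x := by
  have hbase : HasDerivAt (fun x : ℝ => 1 - x ^ 2) (-(2 * x)) x := by
    simpa using (hasDerivAt_pow 2 x).const_sub 1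
  have hpos := one_sub_sq_pos hx
  refine (((f.hasDerivAt x).mul (g.hasDerivAt x)).mul
    (hbase.rpow_const (p := lam + 1 - 1 / 2) (Or.inl hpos.ne'))).congr_deriv ?_
  have hexp : lam + 1 - 1 / 2 = lam - 1 / 2 + 1 := by ring
  rw [hexp, add_sub_cancel_right, Real.rpow_add_one hpos.ne']
  simp only [gegRaise, eval_sub, eval_smul, eval_mul, eval_one, eval_pow, eval_X, smul_eq_mul,
    Pi.mul_apply]
  ring

lemma gegInner_gegRaise_left (hlam : -1 / 2 < lam) (f g : ℝ[X]) :
    gegInner lam (gegRaise lam f) g = gegInner (lam + 1) f (derivative g) := by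
  have hcont : Continuous fun x : ℝ =>
      f.eval x * g.eval x * (1 - x ^ 2) ^ (lam + 1 - 1 / 2) :=
    (f.continuous.mul g.continuous).mul
      (Continuous.rpow_const (by fun_prop) fun _ => Or.inr (by linarith))
  have hintegrable := intervalIntegrable_mul_gegWeight (lam := lam + 1) (by linarith) f
    (derivative g)
  have hintegrable' := intervalIntegrable_mul_gegWeight hlam (gegRaise lam f) g
  have hFTC := intervalIntegral.integral_eq_sub_of_hasDerivAt_of_le (by norm_num)
    hcont.continuousOn (fun x hx => hasDerivAt_mul_gegWeight_add_one lam f g hx)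
    (hintegrable.sub hintegrable')
  have hboundary : (0 : ℝ) ^ (lam + 1 - 1 / 2) = 0 := Real.zero_rpow (by linarith)
  rw [intervalIntegral.integral_sub hintegrable hintegrable'] at hFTC
  simp only [one_pow, neg_one_sq, sub_self, hboundary, mul_zero] at hFTC
  exact (sub_eq_zero.1 hFTC).symm

lemma derivative_gegRaise (lam : ℝ) (f : ℝ[X]) :
    derivative (gegRaise lam f) = gegRaise (lam + 1) (derivative f) + (2 * lam + 1) • f := by
  have hC : (C 2 : ℝ[X]) = 2 := rfl
  simp only [gegRaise, derivative_sub, derivative_smul, derivative_mul, derivative_X,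
    derivative_one, derivative_X_sq]
  simp only [smul_eq_C_mul, C_add, C_mul, C_1, hC]
  ring

lemma gegRaise_smul (c : ℝ) (f : ℝ[X]) : gegRaise lam (c • f) = c • gegRaise lam f := by
  simp only [gegRaise, derivative_smul, mul_smul_comm, smul_sub, smul_comm c]

lemma natDegree_gegRaise_le (lam : ℝ) (f : ℝ[X]) :
    (gegRaise lam f).natDegree ≤ f.natDegree + 1 := by
  obtain hf | hf := Nat.eq_zero_or_pos f.natDegree
  · rw [eq_C_of_natDegree_eq_zero hf]
    simp only [gegRaise, derivative_C, mul_zero, sub_zero]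
    compute_degree
    exact Nat.le_add_left _ _
  · have hX : (X * f).natDegree ≤ f.natDegree + 1 := by
      rw [add_comm]
      exact natDegree_mul_le_of_le natDegree_X_le le_rfl
    have hX_sq : (1 - X ^ 2 : ℝ[X]).natDegree ≤ 2 := by compute_degree
    have hderiv : ((1 - X ^ 2) * derivative f).natDegree ≤ f.natDegree + 1 :=
      (natDegree_mul_le_of_le hX_sq (natDegree_derivative_le f)).trans (by lia)
    exact (natDegree_sub_le_of_le ((natDegree_smul_le _ _).trans hX) hderiv).trans (max_self _).le

lemma gegEigenvalue_succ (lam : ℝ) (n : ℕ) :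
    gegEigenvalue lam (n + 1) = gegEigenvalue (lam + 1) n + (2 * lam + 1) := by
  simp only [gegEigenvalue, Nat.cast_add_one]
  ring

lemma gegEigenvalue_succ_pos (hlam : -1 / 2 < lam) (n : ℕ) : 0 < gegEigenvalue lam (n + 1) := by
  rw [gegEigenvalue, Nat.cast_add_one]
  exact mul_pos n.cast_add_one_pos (by linarith [n.cast_nonneg (α := ℝ)])

lemma gegEigenvalue_nonneg (hlam : -1 / 2 < lam) : ∀ n, 0 ≤ gegEigenvalue lam n
  | 0 => by simp [gegEigenvalue]
  | n + 1 => (gegEigenvalue_succ_pos hlam n).le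

lemma gegInner_gegRaise_self (hlam : -1 / 2 < lam) (f : ℝ[X]) :
    gegInner lam (gegRaise lam f) (gegRaise lam f) =
      gegInner (lam + 1 + 1) (derivative f) (derivative f) +
        (2 * lam + 1) * gegInner (lam + 1) f f := by
  have hlam' : -1 / 2 < lam + 1 := by linarith
  rw [gegInner_gegRaise_left hlam, derivative_gegRaise, gegInner_add_right hlam',
    gegInner_smul_right, gegInner_comm f, gegInner_gegRaise_left hlam']

end Ladder

section GegenbauerPolynomial

variable {lam : ℝ}

lemma natDegree_gegPoly_le (lam : ℝ) (n : ℕ) : (gegPoly lam n).natDegree ≤ n := by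
  induction n generalizing lam with
  | zero => simp [gegPoly]
  | succ n ih => exact (natDegree_gegRaise_le lam _).trans (Nat.succ_le_succ (ih (lam + 1)))

lemma derivative_gegPoly_succ (lam : ℝ) (n : ℕ) :
    derivative (gegPoly lam (n + 1)) = gegEigenvalue lam (n + 1) • gegPoly (lam + 1) n := by
  induction n generalizing lam with
  | zero => simp [gegPoly, gegRaise, gegEigenvalue, smul_eq_C_mul, add_comm]
  | succ n ih =>
    calc derivative (gegPoly lam (n + 1 + 1))
        = gegRaise (lam + 1) (derivative (gegPoly (lam + 1) (n + 1))) +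
            (2 * lam + 1) • gegPoly (lam + 1) (n + 1) := derivative_gegRaise _ _
      _ = gegEigenvalue lam (n + 1 + 1) • gegPoly (lam + 1) (n + 1) := by
        rw [ih, gegRaise_smul, ← gegPoly, gegEigenvalue_succ lam, ← add_smul]

lemma gegPoly_ne_zero (hlam : -1 / 2 < lam) (n : ℕ) : gegPoly lam n ≠ 0 := by
  induction n generalizing lam with
  | zero => exact one_ne_zero
  | succ n ih =>
    intro hzero
    have hderiv := derivative_gegPoly_succ lam n
    rw [hzero, derivative_zero] at hderiv
    exact smul_ne_zero (gegEigenvalue_succ_pos hlam n).ne' (ih (by linarith)) hderiv.symm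

lemma gegInner_add_one_derivative_gegPoly (hlam : -1 / 2 < lam) (n : ℕ) :
    gegInner (lam + 1) (derivative (gegPoly lam n)) (derivative (gegPoly lam n)) =
      gegEigenvalue lam n * gegInner lam (gegPoly lam n) (gegPoly lam n) := by
  cases n with
  | zero => simp [gegPoly, gegEigenvalue, gegInner]
  | succ n =>
    nth_rewrite 1 [derivative_gegPoly_succ]
    rw [gegInner_smul_left, ← gegInner_gegRaise_left hlam, ← gegPoly]

end GegenbauerPolynomial

section Bounds

variable {lam : ℝ}

lemma gegInner_add_one_derivative_self_le (hlam : -1 / 2 < lam) {n : ℕ} {p : ℝ[X]}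
    (hp : p.natDegree ≤ n) :
    gegInner (lam + 1) (derivative p) (derivative p) ≤
      gegEigenvalue lam n * gegInner lam p p := by
  induction n generalizing lam p with
  | zero =>
    rw [eq_C_of_natDegree_le_zero hp]
    simp [gegEigenvalue, gegInner]
  | succ n ih =>
    set μ := gegEigenvalue lam (n + 1) with hμ
    set D := gegInner (lam + 1) (derivative p) (derivative p)
    have hμ_pos : 0 < μ := gegEigenvalue_succ_pos hlam n
    have hraise : gegInner lam (gegRaise lam (derivative p)) (gegRaise lam (derivative p)) ≤
        μ * D := by
      have hderiv := ih (lam := lam + 1) (by linarith)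
        ((natDegree_derivative_le p).trans (Nat.sub_le_of_le_add hp))
      rw [gegInner_gegRaise_self hlam, hμ, gegEigenvalue_succ, add_mul]
      linarith
    have hcross : gegInner lam (gegRaise lam (derivative p)) p = D :=
      gegInner_gegRaise_left hlam _ _
    -- Completing the square: `0 ≤ ‖L p - μ p‖² ≤ μ (μ ‖p‖² - D)` for `L p = gegRaise lam p'`.
    have hsq := gegInner_self_nonneg (lam := lam) (gegRaise lam (derivative p) - μ • p)
    simp only [gegInner_sub_left hlam, gegInner_sub_right hlam, gegInner_smul_left,
      gegInner_smul_right, gegInner_comm p, hcross] at hsq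
    refine le_of_mul_le_mul_left ?_ hμ_pos
    linarith

lemma gegInner_X_mul_self_le (hlam : -1 / 2 < lam) {n : ℕ} {q : ℝ[X]} (hq : q.natDegree ≤ n) :
    (2 * lam + 1) ^ 2 * gegInner lam (X * q) (X * q) ≤
      4 * gegEigenvalue lam (n + 1) * gegInner (lam + 1) q q := by
  have hlam' : -1 / 2 < lam + 1 := by linarith
  set f := (1 - X ^ 2) * derivative q with hf
  have hX : (2 * lam + 1) • (X * q) = gegRaise lam q + f := by rw [gegRaise, sub_add_cancel]
  have hf_norm : gegInner lam f f = gegInner (lam + 1 + 1) (derivative q) (derivative q) := by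
    rw [hf, gegInner_one_sub_X_sq_mul_left hlam, gegInner_comm,
      gegInner_one_sub_X_sq_mul_left hlam']
  have hderiv := gegInner_add_one_derivative_self_le hlam' hq
  have hnonneg := mul_nonneg (by linarith : 0 ≤ 2 * lam + 1)
    (gegInner_self_nonneg (lam := lam + 1) q)
  calc (2 * lam + 1) ^ 2 * gegInner lam (X * q) (X * q)
      = gegInner lam (gegRaise lam q + f) (gegRaise lam q + f) := by
        rw [← hX, gegInner_smul_left, gegInner_smul_right, sq, mul_assoc]
    _ ≤ 2 * (gegInner lam (gegRaise lam q) (gegRaise lam q) + gegInner lam f f) :=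
        gegInner_add_self_le hlam _ _
    _ ≤ 4 * gegEigenvalue lam (n + 1) * gegInner (lam + 1) q q := by
        rw [gegInner_gegRaise_self hlam, gegEigenvalue_succ]
        linarith

lemma gegInner_derivative_self_le (hlam : -1 / 2 < lam) {n : ℕ} {p : ℝ[X]}
    (hp : p.natDegree ≤ n) :
    gegInner lam (derivative p) (derivative p) ≤
      gegEigenvalue lam n * (1 + 4 * gegEigenvalue lam n / (2 * lam + 1) ^ 2) *
        gegInner lam p p := by
  have hX : (2 * lam + 1) ^ 2 * gegInner lam (X * derivative p) (X * derivative p) ≤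
      4 * gegEigenvalue lam n * gegInner (lam + 1) (derivative p) (derivative p) := by
    cases n with
    | zero =>
      rw [eq_C_of_natDegree_le_zero hp]
      simp [gegInner]
    | succ n =>
      exact gegInner_X_mul_self_le hlam
        ((natDegree_derivative_le p).trans (Nat.sub_le_of_le_add hp))
  set μ := gegEigenvalue lam n
  set N := gegInner (lam + 1) (derivative p) (derivative p)
  have hμ : 0 ≤ μ := gegEigenvalue_nonneg hlam n
  have hs : 0 < 2 * lam + 1 := by linarith
  rw [← le_div_iff₀' (by positivity), mul_div_right_comm] at hX
  calc gegInner lam (derivative p) (derivative p)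
      = N + gegInner lam (X * derivative p) (X * derivative p) := by
        rw [← sub_eq_iff_eq_add, ← gegInner_add_one_self hlam]
    _ ≤ (1 + 4 * μ / (2 * lam + 1) ^ 2) * N := by linarith
    _ ≤ (1 + 4 * μ / (2 * lam + 1) ^ 2) * (μ * gegInner lam p p) := by
        gcongr
        exact gegInner_add_one_derivative_self_le hlam hp
    _ = μ * (1 + 4 * μ / (2 * lam + 1) ^ 2) * gegInner lam p p := by ring

end Bounds

section MarkovConst

variable {lam : ℝ}

lemma gegNorm_eval (p : ℝ[X]) : gegNorm lam (fun x => p.eval x) = √(gegInner lam p p) := by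
  simp only [gegNorm, gegInner, Real.sqrt_eq_rpow, sq]

lemma gegNorm_derivative_div_le (hlam : -1 / 2 < lam) {n : ℕ} {p : ℝ[X]} (hp : p.natDegree ≤ n) :
    gegNorm lam (fun x => (derivative p).eval x) / gegNorm lam (fun x => p.eval x) ≤
      √(gegEigenvalue lam n * (1 + 4 * gegEigenvalue lam n / (2 * lam + 1) ^ 2)) := by
  have hμ := gegEigenvalue_nonneg hlam n
  rw [gegNorm_eval, gegNorm_eval]
  refine div_le_of_le_mul₀ (Real.sqrt_nonneg _) (Real.sqrt_nonneg _) ?_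
  rw [← Real.sqrt_mul (by positivity)]
  exact Real.sqrt_le_sqrt (gegInner_derivative_self_le hlam hp)

lemma markovConst_le (hlam : -1 / 2 < lam) (n : ℕ) :
    markovConst lam n ≤
      √(gegEigenvalue lam n * (1 + 4 * gegEigenvalue lam n / (2 * lam + 1) ^ 2)) := by
  refine Real.sSup_le ?_ (Real.sqrt_nonneg _)
  rintro _ ⟨p, -, hp, rfl⟩
  exact gegNorm_derivative_div_le hlam hp

lemma le_markovConst (hlam : -1 / 2 < lam) (n : ℕ) :
    √(gegEigenvalue lam n) ≤ markovConst lam n := by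
  have hG := gegPoly_ne_zero hlam n
  refine le_csSup_of_le
    ⟨√(gegEigenvalue lam n * (1 + 4 * gegEigenvalue lam n / (2 * lam + 1) ^ 2)), ?_⟩
    ⟨gegPoly lam n, hG, natDegree_gegPoly_le lam n, rfl⟩ ?_
  · rintro _ ⟨p, -, hp, rfl⟩
    exact gegNorm_derivative_div_le hlam hp
  · rw [gegNorm_eval, gegNorm_eval, le_div_iff₀ (Real.sqrt_pos.2 (gegInner_self_pos hlam hG)),
      ← Real.sqrt_mul (gegEigenvalue_nonneg hlam n), ← gegInner_add_one_derivative_gegPoly hlam]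
    exact Real.sqrt_le_sqrt (gegInner_add_one_self_le hlam _)

lemma tendsto_gegEigenvalue_div (n : ℕ) (b : ℝ) :
    Tendsto (fun lam => gegEigenvalue lam n / (2 * lam + b)) atTop (𝓝 n) := by
  have hden : Tendsto (fun lam : ℝ => 2 * lam + b) atTop atTop :=
    tendsto_atTop_add_const_right _ _ (tendsto_id.const_mul_atTop two_pos)
  have hlim : Tendsto (fun lam : ℝ => n * (1 + (n - b) / (2 * lam + b))) atTop (𝓝 n) := by
    simpa using ((hden.const_div_atTop ((n : ℝ) - b)).const_add 1).const_mul (n : ℝ)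
  refine hlim.congr' ?_
  filter_upwards [hden.eventually_gt_atTop 0] with lam hpos
  rw [gegEigenvalue]
  field_simp
  ring

end MarkovConst

theorem markov_asymptotics_lambda_to_infty_general (n : ℕ) :
    Tendsto (fun lam : ℝ => markovConst lam n / √(2 * lam)) atTop (𝓝 √n) := by
  have hquot : Tendsto (fun lam => gegEigenvalue lam n / (2 * lam)) atTop (𝓝 n) := by
    simpa using tendsto_gegEigenvalue_div n 0
  have herror : Tendsto (fun lam => 4 * gegEigenvalue lam n / (2 * lam + 1) ^ 2) atTop (𝓝 0) := by
    have hden : Tendsto (fun lam : ℝ => 2 * lam + 1) atTop atTop :=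
      tendsto_atTop_add_const_right _ _ (tendsto_id.const_mul_atTop two_pos)
    refine (((tendsto_gegEigenvalue_div n 1).const_mul 4).div_atTop hden).congr fun lam => ?_
    rw [mul_div_assoc', div_div, sq]
  have hupper : Tendsto (fun lam => √(gegEigenvalue lam n / (2 * lam) *
      (1 + 4 * gegEigenvalue lam n / (2 * lam + 1) ^ 2))) atTop (𝓝 √n) := by
    simpa using (hquot.mul (herror.const_add 1)).sqrt
  refine tendsto_of_tendsto_of_tendsto_of_le_of_le' hquot.sqrt hupper ?_ ?_
  all_goals filter_upwards [eventually_ge_atTop 0] with lam hlam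
  · rw [Real.sqrt_div' _ (by positivity)]
    gcongr
    exact le_markovConst (by linarith) n
  · rw [div_mul_eq_mul_div, Real.sqrt_div' _ (by positivity)]
    gcongr
    exact markovConst_le (by linarith) n

theorem markov_asymptotics_lambda_to_infty (n : ℕ) (hn : 3 ≤ n) :
    Real.sqrt n ≤
      Filter.liminf (fun lam : ℝ => markovConst lam n / Real.sqrt (2*lam)) Filter.atTop ∧
    Filter.limsup (fun lam : ℝ => markovConst lam n / Real.sqrt (2*lam)) Filter.atTop ≤
      Real.sqrt (3*n) := by
  have hlim := markov_asymptotics_lambda_to_infty_general n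
  have hle : (n : ℝ) ≤ 3 * n := by linarith [n.cast_nonneg (α := ℝ)]
  exact ⟨hlim.liminf_eq.ge, hlim.limsup_eq.trans_le (Real.sqrt_le_sqrt hle)⟩
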